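/- arXiv:2102.09540 — 7 statements merged into one kernel-verified Lean document; each statement's English description precedes it below -/
import Mathlib

section
/- Let ψ = 2 − 4·ln(2). For every real number x with x ≥ −1/2, we have ln(1+x) ≥ x + ψ·x². -/
theorem quad_log_lower_bound (x : ℝ) (hx : x ≥ -(1/2)) :
    Real.log (1 + x) ≥ x + (2 - 4 * Real.log 2) * x ^ 2 := by
  have h1 := Real.log_two_gt_d9
  have h2 := Real.log_two_lt_d9
  obtain ⟨c, hc⟩ : ∃ c, c = 4 * Real.log 2 - 2 := ⟨_, rfl⟩
  have hc1 : 0.7 < c := by norm_num at *; linarith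
  have hc2 : c < 0.8 := by norm_num at *; linarith
  set f : ℝ → ℝ := fun y => Real.log (1 + y) - y + c * y ^ 2 with hf
  have hd : ∀ y, -(1/2) ≤ y → HasDerivAt f (y * (2 * c * (1 + y) - 1) / (1 + y)) y := by
    intro y hy
    have hy0 : 1 + y ≠ 0 := by linarith
    have := ((((hasDerivAt_id y).const_add 1).log hy0).sub (hasDerivAt_id y)).add
      (((hasDerivAt_id y).pow 2).const_mul c)
    refine (this.congr_deriv ?_ : HasDerivAt f _ y)
    simp only [id]
    field_simp
    push_cast
    ring
  have h0 : f 0 = 0 := by simp [hf]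
  have hh : f (-(1/2)) = 0 := by
    have : Real.log (1 + -(1/2)) = - Real.log 2 := by
      rw [← Real.log_inv]; norm_num
    simp only [hf, this, hc]; ring
  have mono : ∀ a b, -(1/2) ≤ a → a ≤ b →
      (∀ y, a < y → y < b → 0 ≤ y * (2 * c * (1 + y) - 1)) → f a ≤ f b := by
    intro a b ha hab h
    refine monotoneOn_of_deriv_nonneg (convex_Icc a b)
      (fun y hy => (hd y (ha.trans hy.1)).continuousAt.continuousWithinAt) ?_ ?_
      (Set.left_mem_Icc.2 hab) (Set.right_mem_Icc.2 hab) hab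
    · intro y hy
      rw [interior_Icc] at hy
      exact (hd y (ha.trans hy.1.le)).differentiableAt.differentiableWithinAt
    · intro y hy
      rw [interior_Icc] at hy
      rw [(hd y (ha.trans hy.1.le)).deriv]
      exact div_nonneg (h y hy.1 hy.2) (by linarith [hy.1])
  have anti : ∀ a b, -(1/2) ≤ a → a ≤ b →
      (∀ y, a < y → y < b → y * (2 * c * (1 + y) - 1) ≤ 0) → f b ≤ f a := by
    intro a b ha hab h
    refine antitoneOn_of_deriv_nonpos (convex_Icc a b)
      (fun y hy => (hd y (ha.trans hy.1)).continuousAt.continuousWithinAt) ?_ ?_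
      (Set.left_mem_Icc.2 hab) (Set.right_mem_Icc.2 hab) hab
    · intro y hy
      rw [interior_Icc] at hy
      exact (hd y (ha.trans hy.1.le)).differentiableAt.differentiableWithinAt
    · intro y hy
      rw [interior_Icc] at hy
      rw [(hd y (ha.trans hy.1.le)).deriv]
      exact div_nonpos_of_nonpos_of_nonneg (h y hy.1 hy.2) (by linarith [hy.1])
  have key : 0 ≤ f x := by
    norm_num at hc1 hc2
    rcases le_total 0 x with h | h
    · rw [← h0]
      refine mono 0 x (by norm_num) h fun y hy _ => mul_nonneg hy.le ?_
      nlinarith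
    · rcases le_total (2 * c * (1 + x)) 1 with h' | h'
      · rw [← hh]
        refine mono _ x le_rfl hx fun y _ hy => mul_nonneg_of_nonpos_of_nonpos (by linarith) ?_
        nlinarith
      · rw [← h0]
        refine anti x 0 hx h fun y hy hy' => mul_nonpos_of_nonpos_of_nonneg hy'.le ?_
        nlinarith
  have : f x = Real.log (1 + x) - x + (4 * Real.log 2 - 2) * x ^ 2 := by simp only [hf, hc]
  rw [this] at key
  linarith
end

section
/- For every real λ with 0 ≤ λ < 1 and every real ξ with ξ ≥ −1, we have ln(1 + λ·ξ) ≥ λ·ξ + (ln(1−λ) + λ)·ξ². (Note λ·ξ ≥ −λ > −1, so the left side is well defined.) -/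
theorem fan_exponential_inequality (lam ξ : ℝ) (hlam0 : 0 ≤ lam) (hlam1 : lam < 1)
    (hξ : ξ ≥ -1) :
    Real.log (1 + lam * ξ) ≥ lam * ξ + (Real.log (1 - lam) + lam) * ξ ^ 2 := by
  have hpos : ∀ t : ℝ, 0 ≤ t → t < 1 → 0 < 1 + t * ξ := fun t h0 h1 => by nlinarith
  have hd : ∀ t : ℝ, 0 ≤ t → t < 1 → HasDerivAt
      (fun t : ℝ => Real.log (1 + t * ξ) - (t * ξ + (Real.log (1 - t) + t) * ξ ^ 2))
      (ξ / (1 + t * ξ) - (ξ + (-1 / (1 - t) + 1) * ξ ^ 2)) t := by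
    intro t h0 h1
    have hid := hasDerivAt_id' t
    have hm : HasDerivAt (fun t : ℝ => t * ξ) ξ t := by simpa using hid.mul_const ξ
    have ha := (hm.const_add 1).log (hpos t h0 h1).ne'
    have hb := (hid.const_sub 1).log (sub_pos.2 h1).ne'
    exact ha.sub (hm.add ((hb.add hid).mul_const (ξ ^ 2)))
  have hmono : MonotoneOn
      (fun t : ℝ => Real.log (1 + t * ξ) - (t * ξ + (Real.log (1 - t) + t) * ξ ^ 2))
      (Set.Ico 0 1) := by
    apply monotoneOn_of_deriv_nonneg (convex_Ico 0 1)
    · exact fun t ht => (hd t ht.1 ht.2).continuousAt.continuousWithinAt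
    · intro t ht
      rw [interior_Ico] at ht
      exact (hd t ht.1.le ht.2).differentiableAt.differentiableWithinAt
    · intro t ht
      rw [interior_Ico] at ht
      rw [(hd t ht.1.le ht.2).deriv]
      have h1 := hpos t ht.1.le ht.2
      have h2 : 0 < 1 - t := sub_pos.2 ht.2
      have h3 : ξ / (1 + t * ξ) - (ξ + (-1 / (1 - t) + 1) * ξ ^ 2)
          = t ^ 2 * ξ ^ 2 * (ξ + 1) / ((1 + t * ξ) * (1 - t)) := by
        have h1' := h1.ne'
        have h2' := h2.ne'
        rw [eq_div_iff (mul_ne_zero h1' h2')]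
        have e1 : ξ / (1 + t * ξ) * (1 + t * ξ) = ξ := div_mul_cancel₀ _ h1'
        have e2 : -1 / (1 - t) * (1 - t) = -1 := div_mul_cancel₀ _ h2'
        linear_combination (1 - t) * e1 - ξ ^ 2 * (1 + t * ξ) * e2
      rw [h3]
      have : 0 ≤ ξ + 1 := by linarith
      positivity
  have := hmono (Set.mem_Ico.2 ⟨le_refl 0, one_pos⟩) (Set.mem_Ico.2 ⟨hlam0, hlam1⟩) hlam0
  simp at this
  linarith
end

section
/- The function f(x) = (ln(1+x) − x)/x² is monotone increasing on its domain: for all real numbers x, y with −1 < x ≤ y, x ≠ 0 and y ≠ 0, we have (ln(1+x) − x)/x² ≤ (ln(1+y) − y)/y². -/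
theorem aux_pos (x : ℝ) (hx : -1 < x) (s : ℝ) (hs : s ∈ Set.Icc (0:ℝ) 1) : 0 < 1 + s * x := by
  obtain ⟨h0, h1⟩ := hs
  rcases le_or_gt 0 x with h | h
  · positivity
  · nlinarith

theorem aux_int (x : ℝ) (hx : -1 < x) :
    IntervalIntegrable (fun s : ℝ => s / (1 + s * x)) MeasureTheory.volume 0 1 := by
  apply ContinuousOn.intervalIntegrable
  rw [Set.uIcc_of_le zero_le_one]
  apply ContinuousOn.div (by fun_prop) (by fun_prop)
  intro s hs
  exact (aux_pos x hx s hs).ne'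

theorem aux_eq (x : ℝ) (hx : -1 < x) (hx0 : x ≠ 0) :
    (Real.log (1 + x) - x) / x ^ 2 = - ∫ s in (0:ℝ)..1, s / (1 + s * x) := by
  have h := intervalIntegral.integral_eq_sub_of_hasDerivAt
    (f := fun s : ℝ => s / x - Real.log (1 + s * x) / x ^ 2)
    (f' := fun s : ℝ => s / (1 + s * x)) (a := 0) (b := 1) ?_ (aux_int x hx)
  · rw [h]
    simp
    field_simp
  · intro s hs
    rw [Set.uIcc_of_le zero_le_one] at hs
    have hp := (aux_pos x hx s hs).ne'
    have h1 : HasDerivAt (fun s : ℝ => 1 + s * x) (1 * x) s :=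
      ((hasDerivAt_id s).mul_const x).const_add 1
    have h2 := ((hasDerivAt_id s).div_const x).sub ((h1.log hp).div_const (x ^ 2))
    refine h2.congr_deriv ?_
    have hp2 : 1 + x * s ≠ 0 := by rwa [mul_comm x s]
    field_simp
    ring

theorem log_ratio_monotone (x y : ℝ) (hx : -1 < x) (hxy : x ≤ y) (hx0 : x ≠ 0) (hy0 : y ≠ 0) :
    (Real.log (1 + x) - x) / x ^ 2 ≤ (Real.log (1 + y) - y) / y ^ 2 := by
  have hy : -1 < y := lt_of_lt_of_le hx hxy
  rw [aux_eq x hx hx0, aux_eq y hy hy0]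
  apply neg_le_neg
  apply intervalIntegral.integral_mono_on zero_le_one (aux_int y hy) (aux_int x hx)
  intro s hs
  have := aux_pos x hx s hs
  have h0 := hs.1
  gcongr
end

section
/- In the setting of the reward-predictor martingale result (adapted (w_t, r_t, c_t) with w_t ∈ [0,w_max], r_t ∈ [0,1], c_t ∈ [−1,w_max], conditional means E[w_t|F_{t−1}]=1, E[w_t r_t|F_{t−1}]=v*, E[c_t|F_{t−1}]=0, and predictable uniformly bounded bets λ_{1,t}, λ_{2,t} with 1 + λ_{1,t}(w_t−1) + λ_{2,t}(w_t r_t − c_t − v*) ≥ 0 a.s.), for every α ∈ (0,1] the process K_t^q(v) = ∏_{i=1}^t (1 + λ_{1,i}(w_i−1) + λ_{2,i}(w_i r_i − c_i − v)) satisfies P(∃ t ≥ 1 : K_t^q(v*) > 1/α) ≤ α; equivalently the sets C_t^q = {v ∈ [0,1] : K_t^q(v) ≤ 1/α} and their running intersections ∩_{i≤t} C_i^q are (1−α)-confidence sequences for v*. -/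
open MeasureTheory Finset

theorem ville_aux {Ω : Type*} {m0 : MeasurableSpace Ω} {P : Measure Ω} [IsProbabilityMeasure P]
    (ℱ : Filtration ℕ m0) (M : ℕ → Ω → ℝ) (hM : Martingale M ℱ P)
    (h0 : ∀ ω, M 0 ω = 1) (hnn : ∀ t, ∀ᵐ ω ∂P, 0 ≤ M t ω) (α : ℝ) (hα0 : 0 < α) :
    P {ω | ∃ t : ℕ, M t ω > 1 / α} ≤ ENNReal.ofReal α := by
  have hsub : Submartingale (M⁺) ℱ P := hM.submartingale.pos
  have hint : ∀ n, ∫ ω, (M⁺) n ω ∂P = 1 := by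
    intro n
    have h1 : ∫ ω, (M⁺) n ω ∂P = ∫ ω, M n ω ∂P := by
      apply integral_congr_ae
      filter_upwards [hnn n] with ω h
      change M n ω ⊔ 0 = M n ω
      exact sup_eq_left.2 h
    have h2 := hM.setIntegral_eq (Nat.zero_le n) MeasurableSet.univ
    simp only [Measure.restrict_univ] at h2
    rw [h1, ← h2]
    simp [h0]
  set ε : NNReal := Real.toNNReal (1/α) with hε
  have hεpos : 0 < ε := Real.toNNReal_pos.2 (by positivity)
  have hεα : (ε : ℝ) = 1 / α := Real.coe_toNNReal _ (by positivity)
  let S : ℕ → Set Ω := fun n => {ω | (ε : ℝ) ≤ (range (n+1)).sup' nonempty_range_add_one fun k => (M⁺) k ω}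
  have hS : ∀ n, P (S n) ≤ ENNReal.ofReal α := by
    intro n
    have h := maximal_ineq hsub (fun t ω => (le_sup_right : (0:ℝ) ≤ M t ω ⊔ 0)) (ε := ε) n
    have h2 : ENNReal.ofReal (∫ ω in S n, (M⁺) n ω ∂P) ≤ 1 := by
      rw [← ENNReal.ofReal_one, ← hint n]
      apply ENNReal.ofReal_le_ofReal
      apply setIntegral_le_integral (hsub.integrable n)
      exact Filter.Eventually.of_forall fun ω => (le_sup_right : (0:ℝ) ≤ M n ω ⊔ 0)
    have h3 : (ε : ENNReal) * P (S n) ≤ 1 := le_trans h h2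
    have h4 : ENNReal.ofReal α = (ε : ENNReal)⁻¹ := by
      change _ = (ENNReal.ofReal (1/α))⁻¹
      rw [← ENNReal.ofReal_inv_of_pos (by positivity)]
      simp
    rw [h4, ENNReal.le_inv_iff_mul_le, mul_comm]
    exact h3
  have hmono : Monotone S := by
    intro a b hab ω hω
    have hω' : (ε : ℝ) ≤ (range (a+1)).sup' nonempty_range_add_one fun k => (M⁺) k ω := hω
    have hsub' : range (a+1) ⊆ range (b+1) := Finset.range_mono (by omega)
    exact le_trans hω' (Finset.sup'_mono (fun k => (M⁺) k ω) hsub' nonempty_range_add_one)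
  have hle : {ω | ∃ t : ℕ, M t ω > 1 / α} ⊆ ⋃ n, S n := by
    rintro ω ⟨t, ht⟩
    refine Set.mem_iUnion.2 ⟨t, ?_⟩
    change (ε : ℝ) ≤ _
    rw [hεα]
    refine le_trans ht.le (le_trans (le_sup_left : M t ω ≤ M t ω ⊔ 0) ?_)
    exact Finset.le_sup' (fun k => (M⁺) k ω) (Finset.mem_range.2 (Nat.lt_succ_self t))
  refine (measure_mono hle).trans ?_
  rw [hmono.measure_iUnion]
  exact iSup_le hS

theorem reward_predictor_confidence_sequence
    {Ω : Type*} {m0 : MeasurableSpace Ω} {P : Measure Ω} [IsProbabilityMeasure P]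
    (wmax : ℝ) (hwmax : 1 ≤ wmax)
    (ℱ : Filtration ℕ m0) (hℱ0 : ℱ 0 = ⊥)
    (w r c : ℕ → Ω → ℝ)
    (hadapted : ∀ t : ℕ, StronglyMeasurable[ℱ (t + 1)] (w (t + 1)) ∧
      StronglyMeasurable[ℱ (t + 1)] (r (t + 1)) ∧
      StronglyMeasurable[ℱ (t + 1)] (c (t + 1)))
    (hrange : ∀ t : ℕ, ∀ ω, w (t + 1) ω ∈ Set.Icc 0 wmax ∧
      r (t + 1) ω ∈ Set.Icc (0:ℝ) 1 ∧ c (t + 1) ω ∈ Set.Icc (-1) wmax)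
    (vstar : ℝ) (hvstar : vstar ∈ Set.Icc (0:ℝ) 1)
    (hcondw : ∀ t : ℕ, P[w (t + 1)|ℱ t] =ᵐ[P] fun _ => 1)
    (hcondwr : ∀ t : ℕ, P[fun ω => w (t + 1) ω * r (t + 1) ω|ℱ t] =ᵐ[P] fun _ => vstar)
    (hcondc : ∀ t : ℕ, P[c (t + 1)|ℱ t] =ᵐ[P] fun _ => 0)
    (lam1 lam2 : ℕ → Ω → ℝ)
    (hpred1 : ∀ t : ℕ, StronglyMeasurable[ℱ t] (lam1 (t + 1)))
    (hpred2 : ∀ t : ℕ, StronglyMeasurable[ℱ t] (lam2 (t + 1)))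
    (hbdd : ∃ C : ℝ, ∀ t ω, |lam1 t ω| ≤ C ∧ |lam2 t ω| ≤ C)
    (hdom : ∀ᵐ ω ∂P, ∀ t : ℕ,
      1 + lam1 (t + 1) ω * (w (t + 1) ω - 1) +
        lam2 (t + 1) ω * (w (t + 1) ω * r (t + 1) ω - c (t + 1) ω - vstar) ≥ 0)
    (K : ℕ → ℝ → Ω → ℝ)
    (hK : ∀ t v ω, K t v ω = ∏ i ∈ Finset.Icc 1 t,
      (1 + lam1 i ω * (w i ω - 1) + lam2 i ω * (w i ω * r i ω - c i ω - v)))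
    (α : ℝ) (hα0 : 0 < α) (hα1 : α ≤ 1) :
    P {ω | ∃ t : ℕ, 1 ≤ t ∧ K t vstar ω > 1 / α} ≤ ENNReal.ofReal α ∧
    P {ω | ∃ t : ℕ, vstar ∉ {v : ℝ | v ∈ Set.Icc (0:ℝ) 1 ∧ K t v ω ≤ 1 / α}}
      ≤ ENNReal.ofReal α ∧
    P {ω | ∃ t : ℕ, vstar ∉ ⋂ i ∈ Set.Iic t,
        {v : ℝ | v ∈ Set.Icc (0:ℝ) 1 ∧ K i v ω ≤ 1 / α}} ≤ ENNReal.ofReal α := by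
  obtain ⟨C, hC⟩ := hbdd
  set M : ℕ → Ω → ℝ := fun t => K t vstar with hMdef
  have hM0 : ∀ ω, M 0 ω = 1 := by intro ω; simp [hMdef, hK]
  have hMs : ∀ t ω, M (t+1) ω = M t ω * (1 + lam1 (t+1) ω * (w (t+1) ω - 1) +
      lam2 (t+1) ω * (w (t+1) ω * r (t+1) ω - c (t+1) ω - vstar)) := by
    intro t ω
    simp only [hMdef, hK]
    rw [Finset.prod_Icc_succ_top (by omega)]
  have hY1b : ∀ t ω, |w (t+1) ω - 1| ≤ wmax := by
    intro t ω
    obtain ⟨⟨h1, h2⟩, _, _⟩ := hrange t ω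
    rw [abs_le]; constructor <;> linarith
  have hY2b : ∀ t ω, |w (t+1) ω * r (t+1) ω - c (t+1) ω - vstar| ≤ 2 * wmax + 1 := by
    intro t ω
    obtain ⟨⟨h1, h2⟩, ⟨h3, h4⟩, h5, h6⟩ := hrange t ω
    obtain ⟨h7, h8⟩ := hvstar
    have h9 : 0 ≤ w (t+1) ω * r (t+1) ω := mul_nonneg h1 h3
    have h10 : w (t+1) ω * r (t+1) ω ≤ w (t+1) ω := mul_le_of_le_one_right h1 h4
    rw [abs_le]; constructor <;> linarith
  have hMm : ∀ t, StronglyMeasurable[ℱ t] (M t) := by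
    intro t
    induction t with
    | zero =>
      have : M 0 = fun _ => 1 := funext hM0
      rw [this]; exact stronglyMeasurable_const
    | succ t ih =>
      have : M (t+1) = fun ω => M t ω * (1 + lam1 (t+1) ω * (w (t+1) ω - 1) +
        lam2 (t+1) ω * (w (t+1) ω * r (t+1) ω - c (t+1) ω - vstar)) := funext (hMs t)
      rw [this]
      obtain ⟨a, b, d⟩ := hadapted t
      have hle := ℱ.mono (Nat.le_succ t)
      exact (ih.mono hle).mul ((stronglyMeasurable_const.add
        (((hpred1 t).mono hle).mul (a.sub stronglyMeasurable_const))).add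
        (((hpred2 t).mono hle).mul (((a.mul b).sub d).sub stronglyMeasurable_const)))
  have hMb : ∀ t, ∃ B : ℝ, ∀ ω, |M t ω| ≤ B := by
    intro t
    induction t with
    | zero => exact ⟨1, fun ω => by simp [hM0]⟩
    | succ t ih =>
      obtain ⟨B, hB⟩ := ih
      refine ⟨B * (1 + C * wmax + C * (2 * wmax + 1)), fun ω => ?_⟩
      have hC1 := (hC (t+1) ω).1
      have hC2 := (hC (t+1) ω).2
      have hC0 : 0 ≤ C := (abs_nonneg _).trans hC1
      rw [hMs, abs_mul]
      refine mul_le_mul (hB ω) ?_ (abs_nonneg _) ((abs_nonneg _).trans (hB ω))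
      refine (abs_add_le _ _).trans (add_le_add ((abs_add_le _ _).trans (add_le_add (by simp) ?_)) ?_)
      · rw [abs_mul]; exact mul_le_mul hC1 (hY1b t ω) (abs_nonneg _) hC0
      · rw [abs_mul]; exact mul_le_mul hC2 (hY2b t ω) (abs_nonneg _) hC0
  have hMi : ∀ t, Integrable (M t) P := by
    intro t
    obtain ⟨B, hB⟩ := hMb t
    exact Integrable.of_bound ((hMm t).mono (ℱ.le t)).aestronglyMeasurable B
      (Filter.Eventually.of_forall fun ω => by rw [Real.norm_eq_abs]; exact hB ω)
  have hmart : Martingale M ℱ P := by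
    refine martingale_nat hMm hMi fun t => ?_
    obtain ⟨a, b, d⟩ := hadapted t
    have a' := a.mono (ℱ.le (t+1))
    have b' := b.mono (ℱ.le (t+1))
    have d' := d.mono (ℱ.le (t+1))
    have iw : Integrable (w (t+1)) P := Integrable.of_bound a'.aestronglyMeasurable wmax
      (Filter.Eventually.of_forall fun ω => by
        rw [Real.norm_eq_abs, abs_le]
        have := (hrange t ω).1; constructor <;> linarith [this.1, this.2])
    have ic : Integrable (c (t+1)) P := Integrable.of_bound d'.aestronglyMeasurable wmax
      (Filter.Eventually.of_forall fun ω => by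
        rw [Real.norm_eq_abs, abs_le]
        have := (hrange t ω).2.2; constructor <;> linarith [this.1, this.2])
    have iwr : Integrable (fun ω => w (t+1) ω * r (t+1) ω) P :=
      Integrable.of_bound (a'.mul b').aestronglyMeasurable wmax
      (Filter.Eventually.of_forall fun ω => by
        obtain ⟨⟨h1, h2⟩, ⟨h3, h4⟩, h5, h6⟩ := hrange t ω
        have h9 : 0 ≤ w (t+1) ω * r (t+1) ω := mul_nonneg h1 h3
        have h10 : w (t+1) ω * r (t+1) ω ≤ w (t+1) ω := mul_le_of_le_one_right h1 h4
        rw [Real.norm_eq_abs, abs_le]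
        constructor <;> linarith)
    let Y1 : Ω → ℝ := w (t+1) - fun _ => (1:ℝ)
    let Y2 : Ω → ℝ := ((fun ω => w (t+1) ω * r (t+1) ω) - c (t+1)) - fun _ => vstar
    have iY1 : Integrable Y1 P := iw.sub (integrable_const _)
    have iY2 : Integrable Y2 P := (iwr.sub ic).sub (integrable_const _)
    have e1 : P[Y1|ℱ t] =ᵐ[P] 0 := by
      filter_upwards [condExp_sub iw (integrable_const (1:ℝ)) (ℱ t), hcondw t] with ω h1 h2
      rw [h1, Pi.sub_apply, h2, condExp_const (ℱ.le t)]; simp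
    have e2 : P[Y2|ℱ t] =ᵐ[P] 0 := by
      filter_upwards [condExp_sub (iwr.sub ic) (integrable_const vstar) (ℱ t),
        condExp_sub iwr ic (ℱ t), hcondwr t, hcondc t] with ω h1 h2 h3 h4
      rw [h1, Pi.sub_apply, h2, Pi.sub_apply, h3, h4, condExp_const (ℱ.le t)]; simp
    obtain ⟨B, hB⟩ := hMb t
    have m1 : StronglyMeasurable[ℱ t] (M t * lam1 (t+1)) := (hMm t).mul (hpred1 t)
    have m2 : StronglyMeasurable[ℱ t] (M t * lam2 (t+1)) := (hMm t).mul (hpred2 t)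
    have b1 : ∀ᵐ ω ∂P, ‖(M t * lam1 (t+1)) ω‖ ≤ B * C := Filter.Eventually.of_forall fun ω => by
      rw [Real.norm_eq_abs, Pi.mul_apply, abs_mul]
      exact mul_le_mul (hB ω) (hC _ ω).1 (abs_nonneg _) ((abs_nonneg _).trans (hB ω))
    have b2 : ∀ᵐ ω ∂P, ‖(M t * lam2 (t+1)) ω‖ ≤ B * C := Filter.Eventually.of_forall fun ω => by
      rw [Real.norm_eq_abs, Pi.mul_apply, abs_mul]
      exact mul_le_mul (hB ω) (hC _ ω).2 (abs_nonneg _) ((abs_nonneg _).trans (hB ω))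
    have p1 := condExp_stronglyMeasurable_mul_of_bound (ℱ.le t) m1 iY1 (B * C) b1
    have p2 := condExp_stronglyMeasurable_mul_of_bound (ℱ.le t) m2 iY2 (B * C) b2
    have i1 : Integrable ((M t * lam1 (t+1)) * Y1) P :=
      iY1.bdd_mul (m1.mono (ℱ.le t)).aestronglyMeasurable b1
    have i2 : Integrable ((M t * lam2 (t+1)) * Y2) P :=
      iY2.bdd_mul (m2.mono (ℱ.le t)).aestronglyMeasurable b2
    have hdec : M (t+1) = M t + (M t * lam1 (t+1)) * Y1 + (M t * lam2 (t+1)) * Y2 := by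
      funext ω
      rw [hMs]
      simp only [Pi.add_apply, Pi.mul_apply, Y1, Y2, Pi.sub_apply]
      ring
    rw [hdec]
    filter_upwards [condExp_add ((hMi t).add i1) i2 (ℱ t), condExp_add (hMi t) i1 (ℱ t),
      p1, p2, e1, e2] with ω h1 h2 h3 h4 h5 h6
    rw [h1, Pi.add_apply, h2, Pi.add_apply, h3, h4, Pi.mul_apply, h5, Pi.mul_apply _ (P[Y2|ℱ t]), h6,
      condExp_of_stronglyMeasurable (ℱ.le t) (hMm t) (hMi t)]
    simp
  have hnn : ∀ t, ∀ᵐ ω ∂P, 0 ≤ M t ω := by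
    intro t
    filter_upwards [hdom] with ω h
    induction t with
    | zero => simp [hM0]
    | succ t ih => rw [hMs]; exact mul_nonneg ih (h t)
  have key := ville_aux ℱ M hmart hM0 hnn α hα0
  refine ⟨(measure_mono ?_).trans key, (measure_mono ?_).trans key, (measure_mono ?_).trans key⟩
  · rintro ω ⟨t, -, ht⟩
    exact ⟨t, ht⟩
  · rintro ω ⟨t, ht⟩
    refine ⟨t, ?_⟩
    by_contra hc
    exact ht ⟨hvstar, not_lt.1 hc⟩
  · rintro ω ⟨t, ht⟩
    by_contra hc
    apply ht
    refine Set.mem_iInter₂.2 fun i _ => ⟨hvstar, ?_⟩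
    by_contra h
    exact hc ⟨i, not_le.1 h⟩
end

section
/- Fix w_max ≥ 1, v ∈ [0,1], and λ₂ ∈ ℝ. Define g(λ₁) = min{ 1 + λ₁(w_max − 1) + λ₂(w_max − v), 1 + λ₁(w_max − 1) − λ₂·v, 1 − λ₁ − λ₂·v }. Then g is maximized over λ₁ ∈ ℝ at λ₁* = max(−λ₂, 0); that is, for all λ₁ ∈ ℝ, g(λ₁) ≤ g(max(−λ₂, 0)). Moreover the maximal value is 1 − λ₂·v when λ₂ ≥ 0 and 1 − λ₂·v + λ₂ when λ₂ ≤ 0. -/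
theorem worst_case_lambda1 (wmax v lam2 : ℝ) (hwmax : 1 ≤ wmax)
    (hv : v ∈ Set.Icc (0:ℝ) 1) :
    (∀ lam1 : ℝ,
      min (min (1 + lam1 * (wmax - 1) + lam2 * (wmax - v))
               (1 + lam1 * (wmax - 1) - lam2 * v))
          (1 - lam1 - lam2 * v)
      ≤ min (min (1 + max (-lam2) 0 * (wmax - 1) + lam2 * (wmax - v))
               (1 + max (-lam2) 0 * (wmax - 1) - lam2 * v))
          (1 - max (-lam2) 0 - lam2 * v)) ∧
    (0 ≤ lam2 →
      min (min (1 + max (-lam2) 0 * (wmax - 1) + lam2 * (wmax - v))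
               (1 + max (-lam2) 0 * (wmax - 1) - lam2 * v))
          (1 - max (-lam2) 0 - lam2 * v) = 1 - lam2 * v) ∧
    (lam2 ≤ 0 →
      min (min (1 + max (-lam2) 0 * (wmax - 1) + lam2 * (wmax - v))
               (1 + max (-lam2) 0 * (wmax - 1) - lam2 * v))
          (1 - max (-lam2) 0 - lam2 * v) = 1 - lam2 * v + lam2) := by
  have hw : 0 ≤ wmax - 1 := by linarith
  have A : 0 ≤ lam2 →
      min (min (1 + max (-lam2) 0 * (wmax - 1) + lam2 * (wmax - v))
               (1 + max (-lam2) 0 * (wmax - 1) - lam2 * v))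
          (1 - max (-lam2) 0 - lam2 * v) = 1 - lam2 * v := by
    intro h
    rw [max_eq_right (by linarith : -lam2 ≤ 0)]
    have h1 : 0 ≤ lam2 * wmax := mul_nonneg h (by linarith)
    rw [min_eq_right (by linarith : 1 + 0 * (wmax - 1) - lam2 * v
      ≤ 1 + 0 * (wmax - 1) + lam2 * (wmax - v)), min_eq_left (by linarith)]
    ring
  have B : lam2 ≤ 0 →
      min (min (1 + max (-lam2) 0 * (wmax - 1) + lam2 * (wmax - v))
               (1 + max (-lam2) 0 * (wmax - 1) - lam2 * v))
          (1 - max (-lam2) 0 - lam2 * v) = 1 - lam2 * v + lam2 := by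
    intro h
    rw [max_eq_left (by linarith : 0 ≤ -lam2)]
    have h1 : 0 ≤ -lam2 * wmax := mul_nonneg (by linarith) (by linarith)
    rw [min_eq_left (by linarith : 1 + -lam2 * (wmax - 1) + lam2 * (wmax - v)
      ≤ 1 + -lam2 * (wmax - 1) - lam2 * v), min_eq_left (by linarith)]
    ring
  refine ⟨fun lam1 => ?_, A, B⟩
  rcases le_total 0 lam2 with h | h
  · rw [A h]
    rcases le_total 0 lam1 with h1 | h1
    · exact (min_le_right _ _).trans (by linarith)
    · have := mul_nonneg (neg_nonneg.2 h1) hw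
      exact (min_le_left _ _).trans ((min_le_right _ _).trans (by linarith))
  · rw [B h]
    rcases le_total (-lam2) lam1 with h1 | h1
    · exact (min_le_right _ _).trans (by linarith)
    · have := mul_le_mul_of_nonneg_right h1 hw
      exact (min_le_left _ _).trans ((min_le_left _ _).trans (by linarith))
end

section
/- Fix w_max ≥ 1 and, for v ∈ [0,1], define D_v^{1/2} = {(λ₁, λ₂) ∈ ℝ² : 1 + λ₁(w − 1) + λ₂(w·r − v) ≥ 1/2 for all (w, r) ∈ {0, w_max} × {0, 1}}. Then {(λ₁,λ₂) : λ₂ ≥ 0} ∩ ⋂_{v ∈ [0,1]} D_v^{1/2} = {(λ₁, λ₂) : λ₂ ≥ 0, λ₁ + λ₂ ≤ 1/2, λ₁(1 − w_max) + λ₂ ≤ 1/2}. In particular, this set 𝒞 satisfies 𝒞 ⊆ D_v^{1/2} for every v ∈ [0,1]. -/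
theorem common_feasible_region (wmax : ℝ) (hwmax : 1 ≤ wmax) :
    ({p : ℝ × ℝ | 0 ≤ p.2} ∩
      ⋂ v ∈ Set.Icc (0:ℝ) 1,
        {p : ℝ × ℝ | ∀ w ∈ ({0, wmax} : Set ℝ), ∀ r ∈ ({0, 1} : Set ℝ),
          1 + p.1 * (w - 1) + p.2 * (w * r - v) ≥ 1 / 2} :
      Set (ℝ × ℝ)) =
    {p : ℝ × ℝ | 0 ≤ p.2 ∧ p.1 + p.2 ≤ 1 / 2 ∧ p.1 * (1 - wmax) + p.2 ≤ 1 / 2} ∧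
    ∀ v ∈ Set.Icc (0:ℝ) 1,
      {p : ℝ × ℝ | 0 ≤ p.2 ∧ p.1 + p.2 ≤ 1 / 2 ∧ p.1 * (1 - wmax) + p.2 ≤ 1 / 2} ⊆
        {p : ℝ × ℝ | ∀ w ∈ ({0, wmax} : Set ℝ), ∀ r ∈ ({0, 1} : Set ℝ),
          1 + p.1 * (w - 1) + p.2 * (w * r - v) ≥ 1 / 2} := by 
  have key : ∀ v ∈ Set.Icc (0:ℝ) 1,
      {p : ℝ × ℝ | 0 ≤ p.2 ∧ p.1 + p.2 ≤ 1 / 2 ∧ p.1 * (1 - wmax) + p.2 ≤ 1 / 2} ⊆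
        {p : ℝ × ℝ | ∀ w ∈ ({0, wmax} : Set ℝ), ∀ r ∈ ({0, 1} : Set ℝ),
          1 + p.1 * (w - 1) + p.2 * (w * r - v) ≥ 1 / 2} := by
    rintro v ⟨hv0, hv1⟩ ⟨a, b⟩ ⟨hb, h1, h2⟩
    dsimp only at hb h1 h2
    have e1 : 0 ≤ b * (1 - v) := mul_nonneg hb (by linarith)
    have e2 : 0 ≤ b * wmax := mul_nonneg hb (by linarith)
    rintro w (rfl | rfl) r (rfl | rfl) <;> dsimp only <;> nlinarith
  refine ⟨?_, key⟩
  ext ⟨a, b⟩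
  constructor
  · rintro ⟨hb, h⟩
    have h' := Set.mem_iInter₂.mp h 1 ⟨zero_le_one, le_refl 1⟩
    have h1 := h' 0 (Or.inl rfl) 0 (Or.inl rfl)
    have h2 := h' wmax (Or.inr rfl) 0 (Or.inl rfl)
    dsimp only at h1 h2
    refine ⟨hb, ?_, ?_⟩ <;> dsimp only <;> linarith
  · intro h
    exact ⟨h.1, Set.mem_iInter₂.mpr fun v hv => key v hv h⟩
end

section
/- Fix w_max ≥ 1, m ≤ 1, and set W = w_max − 1. For v ∈ [0,1] define G_v^m = {(λ₁, λ₂) ∈ ℝ² : 1 + λ₁(w − 1) + λ₂(w·r − r − v) ≥ m for all (w, r) ∈ {0, w_max} × {0, 1}}. Then ⋂_{v ∈ [0,1]} G_v^m = {(λ₁, λ₂) : −λ₁ − 2λ₂ ≥ m − 1, −λ₁ ≥ m − 1, W·λ₁ − λ₂ ≥ m − 1, W·λ₁ + W·λ₂ ≥ m − 1}. -/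
theorem gated_feasible_region (wmax m : ℝ) (hwmax : 1 ≤ wmax) (hm : m ≤ 1) :
    (⋂ v ∈ Set.Icc (0:ℝ) 1,
      {p : ℝ × ℝ | ∀ w ∈ ({0, wmax} : Set ℝ), ∀ r ∈ ({0, 1} : Set ℝ),
        1 + p.1 * (w - 1) + p.2 * (w * r - r - v) ≥ m} : Set (ℝ × ℝ)) =
    {p : ℝ × ℝ | -p.1 - 2 * p.2 ≥ m - 1 ∧ -p.1 ≥ m - 1 ∧
      (wmax - 1) * p.1 - p.2 ≥ m - 1 ∧ (wmax - 1) * p.1 + (wmax - 1) * p.2 ≥ m - 1} := by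
  ext ⟨a, b⟩
  simp only [Set.mem_iInter, Set.mem_setOf_eq, Set.mem_Icc, Set.mem_insert_iff,
    Set.mem_singleton_iff]
  constructor
  · intro h
    have h1 := h 1 ⟨by norm_num, le_refl _⟩ 0 (Or.inl rfl) 1 (Or.inr rfl)
    have h2 := h 0 ⟨le_refl _, by norm_num⟩ 0 (Or.inl rfl) 0 (Or.inl rfl)
    have h3 := h 1 ⟨by norm_num, le_refl _⟩ wmax (Or.inr rfl) 0 (Or.inl rfl)
    have h4 := h 0 ⟨le_refl _, by norm_num⟩ wmax (Or.inr rfl) 1 (Or.inr rfl)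
    refine ⟨?_, ?_, ?_, ?_⟩ <;> linarith
  · rintro ⟨h1, h2, h3, h4⟩ v ⟨hv0, hv1⟩ w hw r hr
    have key : ∀ c : ℝ, -1 ≤ c → c ≤ wmax - 1 → (wmax - 1) * a + b * c ≥ m - 1 := by
      intro c hc1 hc2
      rcases le_total 0 b with hb | hb
      · have := mul_le_mul_of_nonneg_left hc1 hb
        linarith
      · have := mul_le_mul_of_nonpos_left hc2 hb
        linarith
    have key0 : ∀ c : ℝ, 0 ≤ c → c ≤ 2 → -a - b * c ≥ m - 1 := by
      intro c hc1 hc2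
      rcases le_total 0 b with hb | hb
      · have := mul_le_mul_of_nonneg_left hc2 hb
        linarith
      · have := mul_le_mul_of_nonpos_left hc1 hb
        linarith
    rcases hw with rfl | rfl <;> rcases hr with rfl | rfl
    · have := key0 v (by linarith) (by linarith)
      linarith
    · have := key0 (1 + v) (by linarith) (by linarith)
      linarith
    · have := key (-v) (by linarith) (by linarith)
      linarith
    · have := key (w - 1 - v) (by linarith) (by linarith)
      linarith
end
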